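/- arXiv:1605.07588 — 8 statements merged into one kernel-verified Lean document; each statement's English description precedes it below -/
import Mathlib

section
/- Let X and Y be Polish spaces with Y compact, let Δ: Y×Y → ℝ be continuous, and let ρ be a Borel probability measure on X×Y with regular conditional distribution ρ(·|x). Define r(x,y) = ∫_Y Δ(y,y') dρ(y'|x) for x in the domain of the conditional distribution (and r(x,y)=0 otherwise), and m(x) = inf_{y∈Y} r(x,y). Then m is a measurable function of x, and there exists a measurable function f*: X → Y such that r(x, f*(x)) = m(x) for every x; moreover f* minimizes the expected risk, i.e. E(f*) = inf{ E(f) : f: X → Y measurable }, where E(f) = ∫ Δ(f(x),y) dρ(x,y). -/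
open MeasureTheory ProbabilityTheory
open scoped ProbabilityTheory

/-!
The minimizers `K x = {y | r x y = m x}` form a nonempty closed subset of the compact space `Y`,
and a closed set `C` meets `K x` iff for every `ε` of the form `1 / (k + 1)` some member `d` of a
fixed countable dense subset of `C` satisfies `r x d < m x + ε`. Hence `{x | K x ∩ C ≠ ∅}` is
measurable for every closed `C`, and `f` is a measurable selection of `K`
(`exists_measurable_selection`).

The selection is obtained by shrinking: for a sequence of closed sets `C n` separating the points
of `Y`, replace the current set by its intersection with `C n` whenever that is nonempty. The
decreasing sets keep the measurability property, and their intersection is nonempty by compactness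
and has at most one point because the `C n` separate points.

Optimality follows by disintegration: the risk of `g` is `∫ r x (g x)`, and
`r x (f x) = m x ≤ r x (g x)` pointwise.
-/

open scoped Classical in
/-- Shrinking of a multifunction `F` along a sequence `C` of sets: at step `n` intersect with `C n`
whenever the result is nonempty. -/
noncomputable def shrink {X Y : Type*} (F : X → Set Y) (C : ℕ → Set Y) : ℕ → X → Set Y
  | 0, x => F x
  | n + 1, x =>
    if (shrink F C n x ∩ C n).Nonempty then shrink F C n x ∩ C n else shrink F C n x

lemma shrink_succ_subset {X Y : Type*} (F : X → Set Y) (C : ℕ → Set Y) (n : ℕ) (x : X) :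
    shrink F C (n + 1) x ⊆ shrink F C n x := by
  rw [shrink]
  split_ifs
  · exact Set.inter_subset_left
  · exact subset_rfl

lemma shrink_nonempty {X Y : Type*} {F : X → Set Y} (C : ℕ → Set Y) {x : X}
    (hF : (F x).Nonempty) (n : ℕ) : (shrink F C n x).Nonempty := by
  induction n with
  | zero => exact hF
  | succ n ih =>
    rw [shrink]
    split_ifs with h
    · exact h
    · exact ih

lemma isClosed_shrink {X Y : Type*} [TopologicalSpace Y] {F : X → Set Y} {C : ℕ → Set Y}
    (hC : ∀ n, IsClosed (C n)) {x : X} (hF : IsClosed (F x)) (n : ℕ) :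
    IsClosed (shrink F C n x) := by
  induction n with
  | zero => exact hF
  | succ n ih =>
    rw [shrink]
    split_ifs with h
    · exact ih.inter (hC n)
    · exact ih

lemma measurableSet_shrink {X Y : Type*} [MeasurableSpace X] [TopologicalSpace Y]
    {F : X → Set Y} {C : ℕ → Set Y} (hC : ∀ n, IsClosed (C n))
    (hF : ∀ D, IsClosed D → MeasurableSet {x | (F x ∩ D).Nonempty}) (n : ℕ) :
    ∀ D, IsClosed D → MeasurableSet {x | (shrink F C n x ∩ D).Nonempty} := by
  induction n with
  | zero => exact hF
  | succ n ih =>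
    intro D hD
    have h : {x | (shrink F C (n + 1) x ∩ D).Nonempty} =
        Set.ite {x | (shrink F C n x ∩ C n).Nonempty}
          {x | (shrink F C n x ∩ (C n ∩ D)).Nonempty} {x | (shrink F C n x ∩ D).Nonempty} := by
      ext x
      by_cases hx : (shrink F C n x ∩ C n).Nonempty
      · simp [shrink, Set.ite, hx, Set.inter_assoc]
      · simp [shrink, Set.ite, hx]
    rw [h]
    exact (ih _ (hC n)).ite (ih _ ((hC n).inter hD)) (ih _ hD)

/-- A second countable regular Hausdorff space has a sequence of closed sets separating points. -/
lemma exists_closed_separating (Y : Type*) [TopologicalSpace Y] [SecondCountableTopology Y]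
    [T3Space Y] : ∃ C : ℕ → Set Y, (∀ n, IsClosed (C n)) ∧
      ∀ y z, y ≠ z → ∃ n, y ∈ C n ∧ z ∉ C n := by
  have hb := TopologicalSpace.isBasis_countableBasis Y
  -- The empty set is inserted only to make the family nonempty, so that it can be enumerated.
  obtain ⟨u, hu⟩ := ((TopologicalSpace.countable_countableBasis Y).insert ∅).exists_eq_range
    (Set.insert_nonempty _ _)
  refine ⟨fun n => closure (u n), fun n => isClosed_closure, fun y z hyz => ?_⟩
  obtain ⟨t, ht, hyt, hts⟩ := hb.exists_closure_subset (isOpen_compl_singleton.mem_nhds hyz)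
  obtain ⟨n, rfl⟩ : t ∈ Set.range u := hu ▸ Set.mem_insert_of_mem _ ht
  exact ⟨n, subset_closure hyt, fun h => hts h rfl⟩

/-- Measurable selection in the compact case: a multifunction with nonempty closed values in a
compact metrizable space, for which hitting any closed set is a measurable event, has a measurable
selection. -/
lemma exists_measurable_selection {X Y : Type*} [MeasurableSpace X] [TopologicalSpace Y]
    [SecondCountableTopology Y] [T3Space Y] [CompactSpace Y] [MeasurableSpace Y] [BorelSpace Y]
    (F : X → Set Y) (hne : ∀ x, (F x).Nonempty) (hcl : ∀ x, IsClosed (F x))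
    (hF : ∀ D, IsClosed D → MeasurableSet {x | (F x ∩ D).Nonempty}) :
    ∃ f : X → Y, Measurable f ∧ ∀ x, f x ∈ F x := by
  obtain ⟨C, hC, hsep⟩ := exists_closed_separating Y
  have hinter : ∀ D, IsClosed D → ∀ x, (∀ n, (shrink F C n x ∩ D).Nonempty) →
      ∃ y ∈ D, ∀ n, y ∈ shrink F C n x := by
    intro D hD x h
    obtain ⟨y, hy⟩ := IsCompact.nonempty_iInter_of_sequence_nonempty_isCompact_isClosed
      (fun n => shrink F C n x ∩ D)
      (fun n => Set.inter_subset_inter_left _ (shrink_succ_subset F C n x)) h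
      ((isClosed_shrink hC (hcl x) 0).inter hD).isCompact
      (fun n => (isClosed_shrink hC (hcl x) n).inter hD)
    rw [Set.mem_iInter] at hy
    exact ⟨y, (hy 0).2, fun n => (hy n).1⟩
  have huniq : ∀ x y z, (∀ n, y ∈ shrink F C n x) → (∀ n, z ∈ shrink F C n x) → y = z := by
    intro x y z hy hz
    by_contra hyz
    obtain ⟨n, hyn, hzn⟩ := hsep y z hyz
    have h := hz (n + 1)
    rw [shrink, if_pos ⟨y, hy n, hyn⟩] at h
    exact hzn h.2
  have hex : ∀ x, ∃ y, ∀ n, y ∈ shrink F C n x := fun x => by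
    obtain ⟨y, -, hy⟩ := hinter Set.univ isClosed_univ x
      (fun n => by simpa using shrink_nonempty C (hne x) n)
    exact ⟨y, hy⟩
  choose f hf using hex
  refine ⟨f, measurable_of_isClosed fun D hD => ?_, fun x => hf x 0⟩
  have h : f ⁻¹' D = ⋂ n, {x | (shrink F C n x ∩ D).Nonempty} := by
    ext x
    rw [Set.mem_preimage, Set.mem_iInter]
    refine ⟨fun hx n => ⟨f x, hf x n, hx⟩, fun hx => ?_⟩
    obtain ⟨y, hyD, hy⟩ := hinter D hD x hx
    rwa [huniq x (f x) y (hf x) hy]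
  rw [h]
  exact MeasurableSet.iInter fun n => measurableSet_shrink hC hF n D hD

/-- For a Carathéodory function `r` (measurable in `x`, continuous in `y`) and a measurable
threshold `m`, hitting a compact set `D` with the sublevel set `{y | r x y ≤ m x}` is a measurable
event. -/
lemma measurableSet_sublevel {X Y : Type*} [MeasurableSpace X] [TopologicalSpace Y]
    {r : X → Y → ℝ} (hrx : ∀ y, Measurable fun x => r x y) (hry : ∀ x, Continuous (r x))
    {m : X → ℝ} (hm : Measurable m) {D : Set Y} [TopologicalSpace.SeparableSpace D]
    (hD : IsCompact D) : MeasurableSet {x | ({y | r x y ≤ m x} ∩ D).Nonempty} := by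
  rcases D.eq_empty_or_nonempty with rfl | hDne
  · simp
  have := hDne.to_subtype
  let d := TopologicalSpace.denseSeq D
  have h : {x | ({y | r x y ≤ m x} ∩ D).Nonempty} =
      ⋂ k : ℕ, ⋃ n, {x | r x (d n) < m x + 1 / ((k : ℝ) + 1)} := by
    ext x
    simp only [Set.mem_iInter, Set.mem_iUnion, Set.mem_ofPred_eq]
    constructor
    · rintro ⟨y, hy, hyD⟩ k
      have hopen : IsOpen {z : D | r x z < m x + 1 / ((k : ℝ) + 1)} :=
        isOpen_lt ((hry x).comp continuous_subtype_val) continuous_const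
      have hpos : (0 : ℝ) < 1 / ((k : ℝ) + 1) := Nat.one_div_pos_of_nat
      obtain ⟨n, hn⟩ := (TopologicalSpace.denseRange_denseSeq D).exists_mem_open hopen
        ⟨⟨y, hyD⟩, lt_of_le_of_lt hy (lt_add_of_pos_right (m x) hpos)⟩
      exact ⟨n, hn⟩
    · intro hx
      obtain ⟨y, hyD, hy⟩ := hD.exists_isMinOn hDne (hry x).continuousOn
      refine ⟨y, ?_, hyD⟩
      by_contra hlt
      have hlt : m x < r x y := not_le.1 hlt
      obtain ⟨k, hk⟩ := exists_nat_one_div_lt (sub_pos.2 hlt)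
      obtain ⟨n, hn⟩ := hx k
      have hmin : r x y ≤ r x (d n) := hy (d n).2
      linarith
  rw [h]
  exact MeasurableSet.iInter fun k => MeasurableSet.iUnion fun n =>
    measurableSet_lt (hrx _) (hm.add_const _)

/-- Existence of a measurable minimizer of the structured expected risk
(Lemma: existence of a solution for the expected risk minimization). -/
theorem stmt0
    {X Y : Type*}
    [TopologicalSpace X] [PolishSpace X] [MeasurableSpace X] [BorelSpace X]
    [TopologicalSpace Y] [PolishSpace Y] [MeasurableSpace Y] [BorelSpace Y]
    [CompactSpace Y] [Nonempty Y]
    (Δ : Y → Y → ℝ) (hΔ : Continuous fun p : Y × Y => Δ p.1 p.2)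
    (ρ : Measure (X × Y)) [IsProbabilityMeasure ρ]
    (κ : Kernel X Y) [IsMarkovKernel κ]
    (hκ : ρ.fst ⊗ₘ κ = ρ)
    (r : X → Y → ℝ) (hr : ∀ x y, r x y = ∫ y', Δ y y' ∂(κ x))
    (m : X → ℝ) (hm : ∀ x, m x = ⨅ y : Y, r x y) :
    Measurable m ∧
      ∃ f : X → Y, Measurable f ∧ (∀ x, r x (f x) = m x) ∧
        IsLeast {v : ℝ | ∃ g : X → Y, Measurable g ∧
            v = ∫ p, Δ (g p.1) p.2 ∂ρ}
          (∫ p, Δ (f p.1) p.2 ∂ρ) := by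
  obtain ⟨B, hB⟩ : ∃ B, ∀ p : Y × Y, ‖Δ p.1 p.2‖ ≤ B := by
    obtain ⟨B, hB⟩ := isCompact_univ.exists_bound_of_continuousOn hΔ.continuousOn
    exact ⟨B, fun p => hB p (Set.mem_univ p)⟩
  have hrx : ∀ y, Measurable fun x => r x y := fun y => by
    simp only [hr]
    have h : Continuous (Δ y) := hΔ.comp (Continuous.prodMk_right y)
    exact (h.stronglyMeasurable.integral_kernel (κ := κ)).measurable
  have hry : ∀ x, Continuous (r x) := fun x => by
    have h : r x = fun y => ∫ y', Δ y y' ∂(κ x) := funext (hr x)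
    rw [h]
    refine continuous_of_dominated (bound := fun _ => B)
      (fun y => (hΔ.comp (Continuous.prodMk_right y)).aestronglyMeasurable)
      (fun y => .of_forall fun y' => hB (y, y')) (integrable_const B)
      (.of_forall fun y' => hΔ.comp (Continuous.prodMk_left y'))
  have hmin : ∀ x, ∃ y, r x y = m x := fun x => by
    obtain ⟨y, -, hy⟩ := isCompact_univ.exists_isMinOn Set.univ_nonempty (hry x).continuousOn
    have hle : ∀ z, r x y ≤ r x z := fun z => hy (Set.mem_univ z)
    refine ⟨y, ?_⟩
    rw [hm]
    exact le_antisymm (le_ciInf hle) (ciInf_le (isCompact_range (hry x)).bddBelow y)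
  have hmle : ∀ x y, m x ≤ r x y := fun x y => by
    rw [hm]
    exact ciInf_le (isCompact_range (hry x)).bddBelow y
  have hmm : Measurable m := by
    refine measurable_of_Iio fun c => ?_
    have h : m ⁻¹' Set.Iio c = ⋃ n, {x | r x (TopologicalSpace.denseSeq Y n) < c} := by
      ext x
      simp only [Set.mem_preimage, Set.mem_Iio, Set.mem_iUnion, Set.mem_ofPred_eq]
      refine ⟨fun hx => ?_, fun ⟨n, hn⟩ => (hmle x _).trans_lt hn⟩
      obtain ⟨y, hy⟩ := hmin x
      exact (TopologicalSpace.denseRange_denseSeq Y).exists_mem_open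
        (isOpen_lt (hry x) continuous_const) ⟨y, hy.trans_lt hx⟩
    rw [h]
    exact MeasurableSet.iUnion fun n => measurableSet_lt (hrx _) measurable_const
  obtain ⟨f, hfm, hf⟩ := exists_measurable_selection (fun x => {y | r x y ≤ m x})
    (fun x => (hmin x).imp fun _ h => h.le) (fun x => isClosed_le (hry x) continuous_const)
    (fun D hD => measurableSet_sublevel hrx hry hmm hD.isCompact)
  have hfeq : ∀ x, r x (f x) = m x := fun x => le_antisymm (hf x) (hmle x _)
  have hint : ∀ g : X → Y, Measurable g →
      Integrable (fun p : X × Y => Δ (g p.1) p.2) (ρ.fst ⊗ₘ κ) := fun g hg => by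
    have hmeas : Measurable fun p : X × Y => Δ (g p.1) p.2 :=
      hΔ.measurable.comp ((hg.comp measurable_fst).prodMk measurable_snd)
    exact Integrable.of_bound hmeas.aestronglyMeasurable B
      (.of_forall fun p => hB (g p.1, p.2))
  have hrisk : ∀ g : X → Y, Measurable g →
      ∫ p, Δ (g p.1) p.2 ∂ρ = ∫ x, r x (g x) ∂ρ.fst := fun g hg => by
    conv_lhs => rw [← hκ]
    rw [Measure.integral_compProd (hint g hg)]
    simp only [hr]
  have hrint : ∀ g : X → Y, Measurable g → Integrable (fun x => r x (g x)) ρ.fst := fun g hg => by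
    simp only [hr]
    have h := hint g hg
    rw [Measure.compProd] at h
    simpa only [Kernel.prodMkLeft_apply, Kernel.const_apply] using h.integral_compProd
  refine ⟨hmm, f, hfm, hfeq, ⟨f, hfm, rfl⟩, ?_⟩
  rintro _ ⟨g, hg, rfl⟩
  rw [hrisk f hfm, hrisk g hg]
  exact integral_mono (hrint f hfm) (hrint g hg) fun x => (hfeq x).trans_le (hmle x _)
end

section
/- Let X and Y be Polish spaces with Y compact, let Δ: Y×Y → ℝ be continuous, and let ρ be a Borel probability measure on X×Y with regular conditional distribution ρ(·|x). If f̃: X → Y is measurable and satisfies f̃(x) ∈ argmin_{y∈Y} ∫_Y Δ(y,y') dρ(y'|x) for ρ_X-almost every x, then E(f̃) = inf{ E(f) : f: X → Y measurable }, where E(f) = ∫ Δ(f(x),y) dρ(x,y). -/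
/-!
The joint law disintegrates as `ρ = ρ.fst ⊗ₘ κ`, and the continuous loss `Δ` is bounded because
`Y` is compact. So every measurable `g` has an integrable loss, and by Fubini its risk is the
`ρ.fst`-integral of its conditional risk `∫ y', Δ (g x) y' ∂(κ x)`. The hypothesis compares
the conditional risks of `f` and `g` at almost every `x`, and integrating gives the inequality.
-/

open MeasureTheory ProbabilityTheory
open scoped ProbabilityTheory

/-- If a measurable `f` pointwise (a.e.) minimizes the conditional risk, then it
minimizes the structured expected risk over all measurable functions. -/
theorem stmt1
    {X Y : Type*}
    [TopologicalSpace X] [PolishSpace X] [MeasurableSpace X] [BorelSpace X]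
    [TopologicalSpace Y] [PolishSpace Y] [MeasurableSpace Y] [BorelSpace Y]
    [CompactSpace Y] [Nonempty Y]
    (Δ : Y → Y → ℝ) (hΔ : Continuous fun p : Y × Y => Δ p.1 p.2)
    (ρ : Measure (X × Y)) [IsProbabilityMeasure ρ]
    (κ : Kernel X Y) [IsMarkovKernel κ]
    (hκ : ρ.fst ⊗ₘ κ = ρ)
    (f : X → Y) (hf : Measurable f)
    (hopt : ∀ᵐ x ∂ρ.fst, ∀ y : Y,
      (∫ y', Δ (f x) y' ∂(κ x)) ≤ ∫ y', Δ y y' ∂(κ x)) :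
    IsLeast {v : ℝ | ∃ g : X → Y, Measurable g ∧
        v = ∫ p, Δ (g p.1) p.2 ∂ρ}
      (∫ p, Δ (f p.1) p.2 ∂ρ) := by
  obtain ⟨C, hC⟩ := isCompact_univ.exists_bound_of_continuousOn hΔ.continuousOn
  have hint (g : X → Y) (hg : Measurable g) :
      Integrable (fun p : X × Y => Δ (g p.1) p.2) (ρ.fst ⊗ₘ κ) := by
    have hm : Measurable fun p : X × Y => Δ (g p.1) p.2 :=
      hΔ.measurable.comp ((hg.comp measurable_fst).prodMk measurable_snd)
    exact .of_bound hm.aestronglyMeasurable C (.of_forall fun p => hC (g p.1, p.2) trivial)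
  have hrisk (g : X → Y) (hg : Measurable g) :
      ∫ p, Δ (g p.1) p.2 ∂ρ = ∫ x, ∫ y', Δ (g x) y' ∂(κ x) ∂ρ.fst := by
    have h := Measure.integral_compProd (hint g hg)
    rwa [hκ] at h
  refine ⟨⟨f, hf, rfl⟩, ?_⟩
  rintro _ ⟨g, hg, rfl⟩
  rw [hrisk f hf, hrisk g hg]
  refine integral_mono_ae (hint f hf).integral_compProd (hint g hg).integral_compProd ?_
  filter_upwards [hopt] with x hx using hx (g x)
end

section
/- Let X and Y be Polish spaces and let Δ: Y×Y → ℝ satisfy Assumption 1 with ψ: Y → H bounded. Let ρ be a Borel probability measure on X×Y with regular conditional distribution ρ(·|x) and let g*(x) = ∫_Y ψ(y) dρ(y|x). Then for every measurable f: X → Y, the expected risk can be written as E(f) = ∫_X ⟨ψ(f(x)), V g*(x)⟩_H dρ_X(x). -/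
/-!
Disintegrating `ρ = ρ.fst ⊗ₘ κ` turns the risk into `∫ x, ∫ y, ⟪ψ (f x), V (ψ y)⟫ ∂κ x ∂ρ.fst`
(Fubini for composition-products). For fixed `x`, the inner integrand is the continuous linear
functional `⟪ψ (f x), V ·⟫` applied to `ψ y`, so it commutes with the Bochner integral and yields
`⟪ψ (f x), V (gstar x)⟫`. Both steps need integrability, which follows from `ψ` being bounded and
strongly measurable (`Y` is second countable) and the measures being finite.
-/

open MeasureTheory ProbabilityTheory
open scoped ProbabilityTheory RealInnerProductSpace

/-- Under Assumption 1 (`Δ(y,y') = ⟪ψ(y), V ψ(y')⟫` with `ψ` bounded continuous and `V`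
bounded linear), the expected risk can be rewritten as
`E(f) = ∫ ⟪ψ(f(x)), V g*(x)⟫ dρ_X(x)` where `g*` is the conditional mean of `ψ`. -/
theorem stmt4
    {X Y H : Type*}
    [TopologicalSpace X] [PolishSpace X] [MeasurableSpace X] [BorelSpace X]
    [TopologicalSpace Y] [PolishSpace Y] [MeasurableSpace Y] [BorelSpace Y]
    [NormedAddCommGroup H] [InnerProductSpace ℝ H] [CompleteSpace H]
    [SecondCountableTopology H]
    (Δ : Y → Y → ℝ) (ψ : Y → H) (hψc : Continuous ψ)
    (Q : ℝ) (hψb : ∀ y, ‖ψ y‖ ≤ Q)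
    (V : H →L[ℝ] H)
    (hΔ : ∀ y y', Δ y y' = ⟪ψ y, V (ψ y')⟫)
    (ρ : Measure (X × Y)) [IsProbabilityMeasure ρ]
    (κ : Kernel X Y) [IsMarkovKernel κ]
    (hκ : ρ.fst ⊗ₘ κ = ρ)
    (gstar : X → H) (hgstar : ∀ x, gstar x = ∫ y, ψ y ∂(κ x)) :
    ∀ f : X → Y, Measurable f →
      (∫ p, Δ (f p.1) p.2 ∂ρ) = ∫ x, ⟪ψ (f x), V (gstar x)⟫ ∂ρ.fst := by
  intro f hf
  have hψm : StronglyMeasurable ψ := hψc.stronglyMeasurable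
  have hint : Integrable (fun p : X × Y => ⟪ψ (f p.1), V (ψ p.2)⟫) (ρ.fst ⊗ₘ κ) := by
    refine Integrable.of_bound (C := Q * (‖V‖ * Q)) ?_ (Filter.Eventually.of_forall fun p => ?_)
    · exact ((hψm.comp_measurable (hf.comp measurable_fst)).inner
        (V.continuous.comp_stronglyMeasurable
          (hψm.comp_measurable measurable_snd))).aestronglyMeasurable
    · have hQ : 0 ≤ Q := (norm_nonneg _).trans (hψb p.2)
      calc ‖⟪ψ (f p.1), V (ψ p.2)⟫‖ ≤ ‖ψ (f p.1)‖ * ‖V (ψ p.2)‖ := norm_inner_le_norm _ _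
        _ ≤ Q * (‖V‖ * Q) := by
          gcongr
          · exact hψb _
          · exact V.le_opNorm_of_le (hψb _)
  have hψi (x : X) : Integrable ψ (κ x) :=
    Integrable.of_bound hψm.aestronglyMeasurable Q (Filter.Eventually.of_forall hψb)
  calc ∫ p, Δ (f p.1) p.2 ∂ρ
      = ∫ p, ⟪ψ (f p.1), V (ψ p.2)⟫ ∂(ρ.fst ⊗ₘ κ) := by simp only [hΔ, hκ]
    _ = ∫ x, ∫ y, ⟪ψ (f x), V (ψ y)⟫ ∂(κ x) ∂ρ.fst := Measure.integral_compProd hint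
    _ = ∫ x, ⟪ψ (f x), V (gstar x)⟫ ∂ρ.fst := by
      congr 1 with x
      rw [integral_inner (V.integrable_comp (hψi x)), V.integral_comp_comm (hψi x), hgstar]
end

section
/- Let X and Y be Polish spaces with Y compact, and let Δ: Y×Y → ℝ satisfy Assumption 1. Let ρ be a Borel probability measure on X×Y with regular conditional distribution ρ(·|x), let g*(x) = ∫_Y ψ(y) dρ(y|x), and let d: H → Y be any measurable map satisfying d(η) ∈ argmin_{y∈Y} ⟨ψ(y), Vη⟩_H for every η ∈ H. Then Fisher consistency holds: E(d ∘ g*) = inf{ E(f) : f: X → Y measurable }, where E(f) = ∫ Δ(f(x),y) dρ(x,y). -/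
open MeasureTheory ProbabilityTheory
open scoped ProbabilityTheory RealInnerProductSpace

/-!
Disintegrating `ρ` and pulling the bounded linear functional `⟪ψ (f x), V ·⟫` out of the inner
integral gives `E(f) = ∫ ⟪ψ (f x), V (g* x)⟫ dρ_X(x)` for every measurable `f`
(`integral_loss_compProd`). The right-hand integrand is minimized pointwise by
`f x = d (g* x)`, which is measurable, so monotonicity of the integral concludes. All the
integrability needed comes from `ψ` being bounded, as a continuous map on a compact space.
-/

/-- A continuous map on a compact space is Bochner integrable against any finite measure. -/
lemma integrable_of_continuous_compact {Y H : Type*}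
    [TopologicalSpace Y] [MeasurableSpace Y] [BorelSpace Y] [CompactSpace Y]
    [NormedAddCommGroup H] [SecondCountableTopology H] [MeasurableSpace H] [BorelSpace H]
    {ψ : Y → H} (hψc : Continuous ψ) (ν : Measure Y) [IsFiniteMeasure ν] :
    Integrable ψ ν := by
  obtain ⟨C, hC⟩ := isCompact_univ.exists_bound_of_continuousOn hψc.continuousOn
  exact .of_bound hψc.measurable.aestronglyMeasurable C (.of_forall fun y => hC y trivial)

lemma integrable_loss {X Y H : Type*} [MeasurableSpace X]
    [TopologicalSpace Y] [MeasurableSpace Y] [BorelSpace Y] [CompactSpace Y]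
    [NormedAddCommGroup H] [InnerProductSpace ℝ H]
    [SecondCountableTopology H] [MeasurableSpace H] [BorelSpace H]
    {ψ : Y → H} (hψc : Continuous ψ) (V : H →L[ℝ] H)
    (ρ : Measure (X × Y)) [IsFiniteMeasure ρ] {f : X → Y} (hf : Measurable f) :
    Integrable (fun p : X × Y => ⟪ψ (f p.1), V (ψ p.2)⟫) ρ := by
  obtain ⟨C, hC⟩ := isCompact_univ.exists_bound_of_continuousOn hψc.continuousOn
  obtain ⟨D, hD⟩ := isCompact_univ.exists_bound_of_continuousOn
    (V.continuous.comp hψc).continuousOn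
  have hmeas : Measurable (fun p : X × Y => ⟪ψ (f p.1), V (ψ p.2)⟫) :=
    (hψc.measurable.comp (hf.comp measurable_fst)).inner
      (V.continuous.measurable.comp (hψc.measurable.comp measurable_snd))
  refine .of_bound hmeas.aestronglyMeasurable (C * D) (.of_forall fun p => ?_)
  exact (norm_inner_le_norm _ _).trans <| mul_le_mul (hC _ trivial) (hD _ trivial)
    (norm_nonneg _) ((norm_nonneg _).trans (hC (f p.1) trivial))

/-- Conditionally on `x`, the expected loss of a prediction `z` depends on the conditional law
only through the conditional mean of `ψ`. -/
lemma integral_inner_eq {Y H : Type*}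
    [TopologicalSpace Y] [MeasurableSpace Y] [BorelSpace Y] [CompactSpace Y]
    [NormedAddCommGroup H] [InnerProductSpace ℝ H] [CompleteSpace H]
    [SecondCountableTopology H] [MeasurableSpace H] [BorelSpace H]
    {ψ : Y → H} (hψc : Continuous ψ) (V : H →L[ℝ] H) (ν : Measure Y) [IsFiniteMeasure ν]
    (z : H) : ∫ y, ⟪z, V (ψ y)⟫ ∂ν = ⟪z, V (∫ y, ψ y ∂ν)⟫ :=
  ((innerSL ℝ z).comp V).integral_comp_comm (integrable_of_continuous_compact hψc ν)

/-- The risk of `f` is the integral of a pointwise objective that sees the conditional law only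
through the conditional mean; integrability of that objective is part of the conclusion. -/
lemma integral_loss_compProd {X Y H : Type*} [MeasurableSpace X]
    [TopologicalSpace Y] [MeasurableSpace Y] [BorelSpace Y] [CompactSpace Y]
    [NormedAddCommGroup H] [InnerProductSpace ℝ H] [CompleteSpace H]
    [SecondCountableTopology H] [MeasurableSpace H] [BorelSpace H]
    {ψ : Y → H} (hψc : Continuous ψ) (V : H →L[ℝ] H)
    (μ : Measure X) [IsFiniteMeasure μ] (κ : Kernel X Y) [IsMarkovKernel κ]
    {f : X → Y} (hf : Measurable f) :
    Integrable (fun x => ⟪ψ (f x), V (∫ y, ψ y ∂(κ x))⟫) μ ∧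
      ∫ p, ⟪ψ (f p.1), V (ψ p.2)⟫ ∂(μ ⊗ₘ κ) = ∫ x, ⟪ψ (f x), V (∫ y, ψ y ∂(κ x))⟫ ∂μ := by
  have hint := integrable_loss hψc V (μ ⊗ₘ κ) hf
  simp_rw [← integral_inner_eq hψc V]
  refine ⟨?_, Measure.integral_compProd hint⟩
  simpa using Integrable.integral_compProd (κ := Kernel.const Unit μ)
    (η := Kernel.prodMkLeft Unit κ) (a := ()) hint

/-- Fisher consistency: the decoding of the surrogate minimizer `g*` minimizes the
structured expected risk over all measurable functions. -/
theorem stmt5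
    {X Y H : Type*}
    [TopologicalSpace X] [PolishSpace X] [MeasurableSpace X] [BorelSpace X]
    [TopologicalSpace Y] [PolishSpace Y] [MeasurableSpace Y] [BorelSpace Y]
    [CompactSpace Y] [Nonempty Y]
    [NormedAddCommGroup H] [InnerProductSpace ℝ H] [CompleteSpace H]
    [SecondCountableTopology H] [MeasurableSpace H] [BorelSpace H]
    (Δ : Y → Y → ℝ) (ψ : Y → H) (hψc : Continuous ψ)
    (V : H →L[ℝ] H)
    (hΔ : ∀ y y', Δ y y' = ⟪ψ y, V (ψ y')⟫)
    (ρ : Measure (X × Y)) [IsProbabilityMeasure ρ]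
    (κ : Kernel X Y) [IsMarkovKernel κ]
    (hκ : ρ.fst ⊗ₘ κ = ρ)
    (gstar : X → H) (hgstar : ∀ x, gstar x = ∫ y, ψ y ∂(κ x))
    (d : H → Y) (hd : Measurable d)
    (hdec : ∀ η : H, ∀ y : Y, ⟪ψ (d η), V η⟫ ≤ ⟪ψ y, V η⟫) :
    IsLeast {v : ℝ | ∃ f : X → Y, Measurable f ∧
        v = ∫ p, Δ (f p.1) p.2 ∂ρ}
      (∫ p, Δ (d (gstar p.1)) p.2 ∂ρ) := by
  have hg : Measurable gstar := by
    rw [funext hgstar]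
    exact (hψc.measurable.stronglyMeasurable.integral_kernel (κ := κ)).measurable
  have hdg : Measurable (d ∘ gstar) := hd.comp hg
  have risk : ∀ f : X → Y, Measurable f →
      Integrable (fun x => ⟪ψ (f x), V (gstar x)⟫) ρ.fst ∧
        ∫ p, Δ (f p.1) p.2 ∂ρ = ∫ x, ⟪ψ (f x), V (gstar x)⟫ ∂ρ.fst := by
    intro f hf
    have h := integral_loss_compProd hψc V ρ.fst κ hf
    rw [hκ] at h
    simpa only [hΔ, hgstar] using h
  refine ⟨⟨d ∘ gstar, hdg, rfl⟩, ?_⟩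
  rintro _ ⟨f, hf, rfl⟩
  obtain ⟨hi, he⟩ := risk (d ∘ gstar) hdg
  obtain ⟨hi', he'⟩ := risk f hf
  rw [he']
  exact he.trans_le (integral_mono hi hi' fun x => hdec (gstar x) (f x))
end

section
/- Let X and Y be Polish spaces with Y compact, and let Δ: Y×Y → ℝ satisfy Assumption 1. Let ρ be a Borel probability measure on X×Y with regular conditional distribution ρ(·|x), let f*: X → Y be a measurable minimizer of the expected risk E, let g*(x) = ∫_Y ψ(y) dρ(y|x) be the minimizer of the surrogate risk R, and let d: H → Y be a measurable map satisfying d(η) ∈ argmin_{y∈Y} ⟨ψ(y), Vη⟩_H for every η ∈ H. Then for every measurable g: X → H the comparison inequality holds: E(d ∘ g) − E(f*) ≤ 2 Q ‖V‖ √(R(g) − R(g*)), where Q = max_{y∈Y} ‖ψ(y)‖_H and ‖V‖ is the operator norm of V. -/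
/-!
Since `Δ` is bilinear in the embeddings, disintegrating `ρ` over its first marginal gives
`E(f) = ∫ ⟪ψ (f x), V (g* x)⟫` (`risk_eq`), so only the conditional mean `g*` of the embedded
output matters. Writing `g* = g + (g* - g)`, the part of `⟪ψ (d (g x)) - ψ (f* x), V (g* x)⟫`
involving `g` is nonpositive because `d` decodes optimally, and the rest is at most
`2 Q ‖V‖ ‖g* x - g x‖` by Cauchy–Schwarz. The bias-variance identity (`bias_variance`), integrated
over the first marginal, says that the excess surrogate risk is exactly `∫ ‖g - g*‖²`, and Jensen's
inequality (`integral_le_sqrt_integral_sq`) bounds `∫ ‖g* - g‖` by its square root.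
-/

open MeasureTheory ProbabilityTheory
open scoped ProbabilityTheory RealInnerProductSpace

/-- The mean squared distance of `ψ` to a point `a` splits into the squared distance of `a` to the
mean of `ψ` and the variance of `ψ`. -/
lemma bias_variance {Y H : Type*} [MeasurableSpace Y]
    [NormedAddCommGroup H] [InnerProductSpace ℝ H] [CompleteSpace H]
    {ν : Measure Y} [IsProbabilityMeasure ν] {ψ : Y → H} (hψ : Integrable ψ ν)
    {m : H} (hm : m = ∫ y, ψ y ∂ν) (hv : Integrable (fun y => ‖m - ψ y‖ ^ 2) ν) (a : H) :
    ∫ y, ‖a - ψ y‖ ^ 2 ∂ν = ‖a - m‖ ^ 2 + ∫ y, ‖m - ψ y‖ ^ 2 ∂ν := by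
  have hexp : ∀ y, ‖a - ψ y‖ ^ 2
      = ‖a - m‖ ^ 2 + 2 * ⟪a - m, m - ψ y⟫ + ‖m - ψ y‖ ^ 2 := by
    intro y
    rw [← norm_add_sq_real, sub_add_sub_cancel]
  have hi : Integrable (fun y => m - ψ y) ν := (integrable_const m).sub hψ
  have hc : ∫ y, ⟪a - m, m - ψ y⟫ ∂ν = 0 := by
    rw [integral_inner hi, integral_sub (integrable_const m) hψ, ← hm]
    simp
  have hci : Integrable (fun y => 2 * ⟪a - m, m - ψ y⟫) ν := (hi.const_inner _).const_mul 2
  simp_rw [hexp]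
  rw [integral_add (by exact (integrable_const _).add hci) hv, integral_add (integrable_const _) hci,
    integral_const_mul, hc]
  simp

lemma integral_le_sqrt_integral_sq {X : Type*} [MeasurableSpace X] {μ : Measure X}
    [IsProbabilityMeasure μ] {u : X → ℝ} (hu : Integrable u μ)
    (hu2 : Integrable (fun x => u x ^ 2) μ) :
    ∫ x, u x ∂μ ≤ Real.sqrt (∫ x, u x ^ 2 ∂μ) := by
  apply Real.le_sqrt_of_sq_le
  set c := ∫ x, u x ∂μ with hc
  -- Jensen's inequality for the square is nonnegativity of the variance.
  have h : 0 ≤ ∫ x, (u x - c) ^ 2 ∂μ := integral_nonneg fun x => sq_nonneg _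
  have hexp : ∀ x, (u x - c) ^ 2 = u x ^ 2 - 2 * c * u x + c ^ 2 := fun x => by ring
  simp_rw [hexp] at h
  rw [integral_add (by exact hu2.sub (hu.const_mul _)) (integrable_const _),
    integral_sub hu2 (hu.const_mul _), integral_const_mul, ← hc] at h
  simp at h
  nlinarith

/-- The structured risk depends on the conditional law of the output only through its conditional
mean embedding. -/
lemma risk_eq {X Y H : Type*} [MeasurableSpace X]
    [TopologicalSpace Y] [MeasurableSpace Y] [BorelSpace Y]
    [NormedAddCommGroup H] [InnerProductSpace ℝ H] [CompleteSpace H]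
    [SecondCountableTopology H] [MeasurableSpace H] [BorelSpace H]
    {ψ : Y → H} (hψ : Continuous ψ) {Q : ℝ} (hQ : ∀ y, ‖ψ y‖ ≤ Q) (V : H →L[ℝ] H)
    {μ : Measure X} [IsProbabilityMeasure μ] (κ : Kernel X Y) [IsMarkovKernel κ]
    {gstar : X → H} (hgstar : ∀ x, gstar x = ∫ y, ψ y ∂(κ x))
    {f : X → Y} (hf : Measurable f) :
    ∫ p, ⟪ψ (f p.1), V (ψ p.2)⟫ ∂(μ ⊗ₘ κ) = ∫ x, ⟪ψ (f x), V (gstar x)⟫ ∂μ := by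
  have hm : Measurable fun p : X × Y => ⟪ψ (f p.1), V (ψ p.2)⟫ :=
    (hψ.measurable.comp (hf.comp measurable_fst)).inner
      (V.continuous.measurable.comp (hψ.measurable.comp measurable_snd))
  have hi : Integrable (fun p : X × Y => ⟪ψ (f p.1), V (ψ p.2)⟫) (μ ⊗ₘ κ) := by
    refine Integrable.of_bound hm.aestronglyMeasurable (Q * (‖V‖ * Q)) (.of_forall fun p => ?_)
    have hQ0 : 0 ≤ Q := (norm_nonneg _).trans (hQ p.2)
    refine (norm_inner_le_norm _ _).trans ?_
    gcongr
    · exact hQ _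
    · exact (V.le_opNorm _).trans (by gcongr; exact hQ _)
  rw [Measure.integral_compProd hi]
  refine integral_congr_ae (.of_forall fun x => ?_)
  have hψi : Integrable ψ (κ x) :=
    .of_bound hψ.measurable.aestronglyMeasurable Q (.of_forall hQ)
  change ∫ y, ⟪ψ (f x), V (ψ y)⟫ ∂(κ x) = _
  rw [integral_inner (V.integrable_comp hψi), V.integral_comp_comm hψi, ← hgstar]

/-- Comparison inequality:
`E(d ∘ g) − E(f*) ≤ 2 Q ‖V‖ √(R(g) − R(g*))` with `Q = max_y ‖ψ(y)‖`. -/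
theorem stmt6
    {X Y H : Type*}
    [TopologicalSpace X] [PolishSpace X] [MeasurableSpace X] [BorelSpace X]
    [TopologicalSpace Y] [PolishSpace Y] [MeasurableSpace Y] [BorelSpace Y]
    [CompactSpace Y] [Nonempty Y]
    [NormedAddCommGroup H] [InnerProductSpace ℝ H] [CompleteSpace H]
    [SecondCountableTopology H] [MeasurableSpace H] [BorelSpace H]
    (Δ : Y → Y → ℝ) (ψ : Y → H) (hψc : Continuous ψ)
    (V : H →L[ℝ] H)
    (hΔ : ∀ y y', Δ y y' = ⟪ψ y, V (ψ y')⟫)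
    (ρ : Measure (X × Y)) [IsProbabilityMeasure ρ]
    (κ : Kernel X Y) [IsMarkovKernel κ]
    (hκ : ρ.fst ⊗ₘ κ = ρ)
    (fstar : X → Y) (hfstarm : Measurable fstar)
    (hfstar : ∀ f : X → Y, Measurable f →
      (∫ p, Δ (fstar p.1) p.2 ∂ρ) ≤ ∫ p, Δ (f p.1) p.2 ∂ρ)
    (gstar : X → H) (hgstar : ∀ x, gstar x = ∫ y, ψ y ∂(κ x))
    (d : H → Y) (hd : Measurable d)
    (hdec : ∀ η : H, ∀ y : Y, ⟪ψ (d η), V η⟫ ≤ ⟪ψ y, V η⟫)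
    (Q : ℝ) (hQ : Q = ⨆ y : Y, ‖ψ y‖)
    (g : X → H) (hg : Measurable g)
    (hgint : Integrable (fun p : X × Y => ‖g p.1 - ψ p.2‖ ^ 2) ρ) :
    (∫ p, Δ (d (g p.1)) p.2 ∂ρ) - (∫ p, Δ (fstar p.1) p.2 ∂ρ)
      ≤ 2 * Q * ‖V‖ *
        Real.sqrt ((∫ p, ‖g p.1 - ψ p.2‖ ^ 2 ∂ρ) - ∫ p, ‖gstar p.1 - ψ p.2‖ ^ 2 ∂ρ) := by
  have hbdd : BddAbove (Set.range fun y => ‖ψ y‖) :=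
    (isCompact_range hψc.norm).bddAbove
  have hψQ : ∀ y, ‖ψ y‖ ≤ Q := fun y => hQ ▸ le_ciSup hbdd y
  have hQ0 : 0 ≤ Q := (norm_nonneg _).trans (hψQ (Classical.arbitrary Y))
  have hψi : ∀ x, Integrable ψ (κ x) := fun x =>
    .of_bound hψc.measurable.aestronglyMeasurable Q (.of_forall hψQ)
  have hgQ : ∀ x, ‖gstar x‖ ≤ Q := fun x => by
    rw [hgstar]
    simpa using norm_integral_le_of_norm_le_const (μ := κ x) (.of_forall hψQ)
  have hgm : Measurable gstar := by
    have h : StronglyMeasurable fun x => ∫ y, ψ y ∂(κ x) :=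
      StronglyMeasurable.integral_kernel hψc.measurable.stronglyMeasurable
    rw [funext hgstar]
    exact h.measurable
  set μ := ρ.fst with hμ
  simp_rw [hΔ]
  rw [← hκ] at hgint ⊢
  rw [risk_eq hψc hψQ V κ hgstar (f := fun x => d (g x)) (hd.comp hg),
    risk_eq hψc hψQ V κ hgstar hfstarm]
  have hvb : ∀ x y, ‖‖gstar x - ψ y‖ ^ 2‖ ≤ (Q + Q) ^ 2 := fun x y => by
    rw [norm_pow, norm_norm]
    gcongr
    exact (norm_sub_le _ _).trans (add_le_add (hgQ x) (hψQ y))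
  have hvi : Integrable (fun p : X × Y => ‖gstar p.1 - ψ p.2‖ ^ 2) (μ ⊗ₘ κ) :=
    .of_bound (((hgm.comp measurable_fst).sub
      (hψc.measurable.comp measurable_snd)).norm.pow_const 2).aestronglyMeasurable _
      (.of_forall fun p => hvb p.1 p.2)
  have hbv : ∀ x, ∫ y, ‖g x - ψ y‖ ^ 2 ∂(κ x)
      = ‖g x - gstar x‖ ^ 2 + ∫ y, ‖gstar x - ψ y‖ ^ 2 ∂(κ x) := fun x =>
    bias_variance (hψi x) (hgstar x)
      (.of_bound ((measurable_const.sub hψc.measurable).norm.pow_const 2).aestronglyMeasurable _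
        (.of_forall (hvb x))) (g x)
  have hI1 : Integrable (fun x => ∫ y, ‖g x - ψ y‖ ^ 2 ∂(κ x)) μ := by
    simpa using ((Measure.integrable_compProd_iff hgint.1).1 hgint).2
  have hI2 : Integrable (fun x => ∫ y, ‖gstar x - ψ y‖ ^ 2 ∂(κ x)) μ := by
    simpa using ((Measure.integrable_compProd_iff hvi.1).1 hvi).2
  have hsq : Integrable (fun x => ‖g x - gstar x‖ ^ 2) μ :=
    (hI1.sub hI2).congr (.of_forall fun x => by simp [hbv x])
  have hexcess : (∫ p, ‖g p.1 - ψ p.2‖ ^ 2 ∂(μ ⊗ₘ κ)) - ∫ p, ‖gstar p.1 - ψ p.2‖ ^ 2 ∂(μ ⊗ₘ κ)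
      = ∫ x, ‖g x - gstar x‖ ^ 2 ∂μ := by
    rw [Measure.integral_compProd hgint, Measure.integral_compProd hvi, ← integral_sub hI1 hI2]
    exact integral_congr_ae (.of_forall fun x => by simp [hbv x])
  have hnm : Measurable fun x => ‖g x - gstar x‖ := (hg.sub hgm).norm
  have hn : Integrable (fun x => ‖g x - gstar x‖) μ := by
    refine ((integrable_const (1 : ℝ)).add hsq).mono' hnm.aestronglyMeasurable
      (.of_forall fun x => ?_)
    rw [norm_norm, Pi.add_apply]
    nlinarith [sq_nonneg (‖g x - gstar x‖ - 1), sq_nonneg ‖g x - gstar x‖]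
  have hri : ∀ f : X → Y, Measurable f →
      Integrable (fun x => ⟪ψ (f x), V (gstar x)⟫) μ := fun f hf => by
    refine .of_bound ((hψc.measurable.comp hf).inner
      (V.continuous.measurable.comp hgm)).aestronglyMeasurable (Q * (‖V‖ * Q))
      (.of_forall fun x => ?_)
    refine (norm_inner_le_norm _ _).trans ?_
    gcongr
    · exact hψQ _
    · exact (V.le_opNorm _).trans (by gcongr; exact hgQ _)
  have hpt : ∀ x, ⟪ψ (d (g x)), V (gstar x)⟫ - ⟪ψ (fstar x), V (gstar x)⟫
      ≤ 2 * Q * ‖V‖ * ‖g x - gstar x‖ := fun x => by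
    have h1 := hdec (g x) (fstar x)
    have h2 : ⟪ψ (fstar x) - ψ (d (g x)), V (g x - gstar x)⟫
        ≤ (Q + Q) * (‖V‖ * ‖g x - gstar x‖) := by
      refine (real_inner_le_norm _ _).trans ?_
      gcongr
      · exact (norm_sub_le _ _).trans (add_le_add (hψQ _) (hψQ _))
      · exact V.le_opNorm _
    rw [map_sub, inner_sub_left, inner_sub_right, inner_sub_right] at h2
    linarith
  rw [hexcess, ← integral_sub (hri (fun x => d (g x)) (hd.comp hg)) (hri _ hfstarm)]
  calc _ ≤ ∫ x, 2 * Q * ‖V‖ * ‖g x - gstar x‖ ∂μ :=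
        integral_mono ((hri _ (hd.comp hg)).sub (hri _ hfstarm)) (hn.const_mul _) hpt
    _ = 2 * Q * ‖V‖ * ∫ x, ‖g x - gstar x‖ ∂μ := integral_const_mul _ _
    _ ≤ _ := by
        gcongr
        exact integral_le_sqrt_integral_sq hn hsq
end

section
/- Let Y be a compact Polish space and suppose Δ₁, Δ₂: Y×Y → ℝ satisfy Assumption 1, witnessed by separable Hilbert spaces H₁, H₂, continuous maps ψ₁: Y → H₁ and ψ₂: Y → H₂ bounded by constants C₁ and C₂, and nonzero bounded operators V₁, V₂. Then for any real numbers α₁, α₂, the loss α₁Δ₁ + α₂Δ₂ satisfies Assumption 1: there exist a separable Hilbert space H (which may be taken as the Hilbert direct sum H₁ ⊕ H₂), a continuous map ψ: Y → H with sup_{y∈Y} ‖ψ(y)‖²_H ≤ |α₁| ‖V₁‖ C₁² + |α₂| ‖V₂‖ C₂², and a bounded operator V: H → H with ‖V‖ ≤ 1, such that α₁Δ₁(y,y') + α₂Δ₂(y,y') = ⟨ψ(y), V ψ(y')⟩_H for all y, y' ∈ Y. -/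
/-! Each loss is rescaled separately. With `s = √(|α| ‖V‖)` and `W = (sign α / ‖V‖) • V` one has
`‖W‖ ≤ 1` and `α ⟪x, V y⟫ = ⟪s x, W (s y)⟫` (`exists_normalized_form`); for `V = 0` both sides
vanish, since then `W = 0`. On `H₁ ⊕ H₂` the theorem
follows by taking the map `(s₁ ψ₁, s₂ ψ₂)` and the operator `W₁ ⊕ W₂`: the squared norms add up to
`s₁² ‖ψ₁‖² + s₂² ‖ψ₂‖²`, and a direct sum of contractions is a contraction for the Hilbert norm
(`norm_diagOp_le_one`). -/

open scoped RealInnerProductSpace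

/-- The scalar `α` and the norm of `V` can be moved into a rescaling of both arguments by
`s = √(|α| ‖V‖)`, leaving a contraction `W`. -/
lemma exists_normalized_form {H : Type*} [NormedAddCommGroup H] [InnerProductSpace ℝ H]
    (α : ℝ) (V : H →L[ℝ] H) :
    ∃ (s : ℝ) (W : H →L[ℝ] H), s ^ 2 = |α| * ‖V‖ ∧ ‖W‖ ≤ 1 ∧
      ∀ x y : H, α * ⟪x, V y⟫ = ⟪s • x, W (s • y)⟫ := by
  have hs : √(|α| * ‖V‖) ^ 2 = |α| * ‖V‖ := Real.sq_sqrt (by positivity)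
  refine ⟨√(|α| * ‖V‖), ((SignType.sign α : ℝ) * ‖V‖⁻¹) • V, hs, ?_, fun x y => ?_⟩
  · rw [norm_smul, norm_mul, norm_inv, norm_norm, mul_assoc]
    have h1 : ‖(SignType.sign α : ℝ)‖ ≤ 1 := by
      rcases lt_trichotomy α 0 with h | h | h <;> simp [h]
    have h2 : ‖V‖⁻¹ * ‖V‖ ≤ 1 := inv_mul_le_one
    exact mul_le_one₀ h1 (by positivity) h2
  · rw [map_smul, real_inner_smul_left, real_inner_smul_right, smul_apply,
      real_inner_smul_right, ← mul_assoc, ← sq, hs]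
    rcases eq_or_ne V 0 with rfl | hV
    · simp
    · have hV' : ‖V‖ ≠ 0 := norm_ne_zero_iff.mpr hV
      have hα : |α| * (SignType.sign α : ℝ) = α := abs_mul_sign α
      calc α * ⟪x, V y⟫ = |α| * (SignType.sign α : ℝ) * ⟪x, V y⟫ := by rw [hα]
        _ = _ := by field_simp

/-- The direct sum `W₁ ⊕ W₂` of two bounded operators, acting diagonally on the Hilbert sum. -/
noncomputable def diagOp {H₁ H₂ : Type*}
    [NormedAddCommGroup H₁] [InnerProductSpace ℝ H₁]
    [NormedAddCommGroup H₂] [InnerProductSpace ℝ H₂]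
    (W₁ : H₁ →L[ℝ] H₁) (W₂ : H₂ →L[ℝ] H₂) :
    WithLp 2 (H₁ × H₂) →L[ℝ] WithLp 2 (H₁ × H₂) :=
  ((WithLp.prodContinuousLinearEquiv 2 ℝ H₁ H₂).symm : H₁ × H₂ →L[ℝ] WithLp 2 (H₁ × H₂)) ∘L
    (W₁.prodMap W₂) ∘L
    (WithLp.prodContinuousLinearEquiv 2 ℝ H₁ H₂ : WithLp 2 (H₁ × H₂) →L[ℝ] H₁ × H₂)

lemma diagOp_apply {H₁ H₂ : Type*}
    [NormedAddCommGroup H₁] [InnerProductSpace ℝ H₁]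
    [NormedAddCommGroup H₂] [InnerProductSpace ℝ H₂]
    (W₁ : H₁ →L[ℝ] H₁) (W₂ : H₂ →L[ℝ] H₂) (x : WithLp 2 (H₁ × H₂)) :
    diagOp W₁ W₂ x = WithLp.toLp 2 (W₁ x.fst, W₂ x.snd) := rfl

lemma norm_diagOp_le_one {H₁ H₂ : Type*}
    [NormedAddCommGroup H₁] [InnerProductSpace ℝ H₁]
    [NormedAddCommGroup H₂] [InnerProductSpace ℝ H₂]
    {W₁ : H₁ →L[ℝ] H₁} {W₂ : H₂ →L[ℝ] H₂} (h₁ : ‖W₁‖ ≤ 1) (h₂ : ‖W₂‖ ≤ 1) :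
    ‖diagOp W₁ W₂‖ ≤ 1 := by
  refine ContinuousLinearMap.opNorm_le_bound _ zero_le_one fun x => ?_
  rw [one_mul, ← sq_le_sq₀ (norm_nonneg _) (norm_nonneg _), diagOp_apply,
    WithLp.prod_norm_sq_eq_of_L2, WithLp.prod_norm_sq_eq_of_L2]
  have e₁ : ‖W₁ x.fst‖ ≤ ‖x.fst‖ := by simpa using W₁.le_of_opNorm_le h₁ x.fst
  have e₂ : ‖W₂ x.snd‖ ≤ ‖x.snd‖ := by simpa using W₂.le_of_opNorm_le h₂ x.snd
  exact add_le_add (pow_le_pow_left₀ (norm_nonneg _) e₁ 2)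
    (pow_le_pow_left₀ (norm_nonneg _) e₂ 2)

/-- Linear combinations of losses satisfying Assumption 1 satisfy Assumption 1:
`α₁Δ₁ + α₂Δ₂ = ⟪ψ(·), V ψ(·)⟫` on the Hilbert direct sum `H₁ ⊕ H₂`, with
`sup_y ‖ψ(y)‖² ≤ |α₁|‖V₁‖C₁² + |α₂|‖V₂‖C₂²` and `‖V‖ ≤ 1`. -/
theorem stmt11
    {Y H₁ H₂ : Type*}
    [TopologicalSpace Y] [PolishSpace Y] [MeasurableSpace Y] [BorelSpace Y]
    [CompactSpace Y]
    [NormedAddCommGroup H₁] [InnerProductSpace ℝ H₁] [CompleteSpace H₁]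
    [SecondCountableTopology H₁]
    [NormedAddCommGroup H₂] [InnerProductSpace ℝ H₂] [CompleteSpace H₂]
    [SecondCountableTopology H₂]
    (Δ₁ Δ₂ : Y → Y → ℝ)
    (ψ₁ : Y → H₁) (ψ₂ : Y → H₂) (hψ₁ : Continuous ψ₁) (hψ₂ : Continuous ψ₂)
    (C₁ C₂ : ℝ) (hC₁ : ∀ y, ‖ψ₁ y‖ ≤ C₁) (hC₂ : ∀ y, ‖ψ₂ y‖ ≤ C₂)
    (V₁ : H₁ →L[ℝ] H₁) (V₂ : H₂ →L[ℝ] H₂) (hV₁ : V₁ ≠ 0) (hV₂ : V₂ ≠ 0)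
    (hΔ₁ : ∀ y y', Δ₁ y y' = ⟪ψ₁ y, V₁ (ψ₁ y')⟫)
    (hΔ₂ : ∀ y y', Δ₂ y y' = ⟪ψ₂ y, V₂ (ψ₂ y')⟫)
    (α₁ α₂ : ℝ) :
    ∃ (ψ : Y → WithLp 2 (H₁ × H₂))
      (V : WithLp 2 (H₁ × H₂) →L[ℝ] WithLp 2 (H₁ × H₂)),
      Continuous ψ ∧
      (∀ y, ‖ψ y‖ ^ 2 ≤ |α₁| * ‖V₁‖ * C₁ ^ 2 + |α₂| * ‖V₂‖ * C₂ ^ 2) ∧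
      ‖V‖ ≤ 1 ∧
      ∀ y y', α₁ * Δ₁ y y' + α₂ * Δ₂ y y' = ⟪ψ y, V (ψ y')⟫ := by
  obtain ⟨s₁, W₁, hs₁, hW₁, h₁⟩ := exists_normalized_form α₁ V₁
  obtain ⟨s₂, W₂, hs₂, hW₂, h₂⟩ := exists_normalized_form α₂ V₂
  refine ⟨fun y => WithLp.toLp 2 (s₁ • ψ₁ y, s₂ • ψ₂ y), diagOp W₁ W₂, ?_, fun y => ?_,
    norm_diagOp_le_one hW₁ hW₂, fun y y' => ?_⟩
  · exact (WithLp.prod_continuous_toLp 2 H₁ H₂).comp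
      ((hψ₁.const_smul s₁).prodMk (hψ₂.const_smul s₂))
  · rw [WithLp.prod_norm_sq_eq_of_L2]
    change ‖s₁ • ψ₁ y‖ ^ 2 + ‖s₂ • ψ₂ y‖ ^ 2 ≤ _
    simp only [norm_smul, mul_pow, Real.norm_eq_abs, sq_abs, hs₁, hs₂]
    gcongr
    · exact hC₁ y
    · exact hC₂ y
  · rw [hΔ₁, hΔ₂, h₁, h₂, diagOp_apply, WithLp.prod_inner_apply]
    rfl
end

section
/- Let Y be a compact Polish space and Z a topological space, let Δ₀: Z×Z → ℝ satisfy Assumption 1 on Z (with separable Hilbert space H₀, continuous bounded ψ₀: Z → H₀ and bounded operator V₀), let F, G: Y → Z be continuous maps, and let f, g: Y → ℝ be bounded continuous functions. Then the loss Δ(y,y') = f(y) Δ₀(F(y), G(y')) g(y') satisfies Assumption 1 on Y: there exist a separable Hilbert space H (which may be taken as H₀ ⊕ H₀), a continuous bounded map ψ: Y → H, and a bounded operator V: H → H such that Δ(y,y') = ⟨ψ(y), V ψ(y')⟩_H for all y, y' ∈ Y. -/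
/-!
The feature map is `ψ y = (f(y) ψ₀(F y), g(y) ψ₀(G y))` in `H₀ ⊕ H₀`, and `V (a, b) = (V₀ b, 0)`.
Then `⟪ψ y, V (ψ y')⟫` pairs the first component of `ψ y` with `V₀` applied to the second component
of `ψ y'`, which is the composite loss by bilinearity. Continuity of `ψ` is componentwise, and
boundedness follows from compactness of `Y`.
-/

open scoped RealInnerProductSpace

/-- Composite losses: if `Δ₀` satisfies Assumption 1 on `Z`, `F, G : Y → Z` are
continuous and `f, g : Y → ℝ` are bounded continuous, then the loss
`Δ(y,y') = f(y) Δ₀(F(y), G(y')) g(y')` satisfies Assumption 1 on `Y`,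
with Hilbert space `H₀ ⊕ H₀`. -/
theorem stmt12
    {Y Z H₀ : Type*}
    [TopologicalSpace Y] [PolishSpace Y] [MeasurableSpace Y] [BorelSpace Y]
    [CompactSpace Y]
    [TopologicalSpace Z]
    [NormedAddCommGroup H₀] [InnerProductSpace ℝ H₀] [CompleteSpace H₀]
    [SecondCountableTopology H₀]
    (Δ₀ : Z → Z → ℝ)
    (ψ₀ : Z → H₀) (hψ₀c : Continuous ψ₀) (C₀ : ℝ) (hψ₀b : ∀ z, ‖ψ₀ z‖ ≤ C₀)
    (V₀ : H₀ →L[ℝ] H₀)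
    (hΔ₀ : ∀ z z', Δ₀ z z' = ⟪ψ₀ z, V₀ (ψ₀ z')⟫)
    (F G : Y → Z) (hF : Continuous F) (hG : Continuous G)
    (f g : Y → ℝ) (hf : Continuous f) (hg : Continuous g)
    (Cf Cg : ℝ) (hfb : ∀ y, |f y| ≤ Cf) (hgb : ∀ y, |g y| ≤ Cg) :
    ∃ (ψ : Y → WithLp 2 (H₀ × H₀))
      (V : WithLp 2 (H₀ × H₀) →L[ℝ] WithLp 2 (H₀ × H₀)),
      Continuous ψ ∧ (∃ C : ℝ, ∀ y, ‖ψ y‖ ≤ C) ∧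
      ∀ y y', f y * Δ₀ (F y) (G y') * g y' = ⟪ψ y, V (ψ y')⟫ := by
  let e := WithLp.prodContinuousLinearEquiv 2 ℝ H₀ H₀
  have hψ : Continuous fun y => e.symm (f y • ψ₀ (F y), g y • ψ₀ (G y)) :=
    e.symm.continuous.comp
      ((hf.smul (hψ₀c.comp hF)).prodMk (hg.smul (hψ₀c.comp hG)))
  refine ⟨fun y => e.symm (f y • ψ₀ (F y), g y • ψ₀ (G y)),
    (e.symm : H₀ × H₀ →L[ℝ] WithLp 2 (H₀ × H₀)) ∘L
      (ContinuousLinearMap.inl ℝ H₀ H₀ ∘L V₀ ∘L ContinuousLinearMap.snd ℝ H₀ H₀) ∘L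
      (e : WithLp 2 (H₀ × H₀) →L[ℝ] H₀ × H₀), hψ, ?_, fun y y' => ?_⟩
  · obtain ⟨C, hC⟩ := isCompact_univ.exists_bound_of_continuousOn hψ.continuousOn
    exact ⟨C, fun y => hC y (Set.mem_univ y)⟩
  · simp [e, hΔ₀, WithLp.prod_inner_apply, real_inner_smul_left, real_inner_smul_right]
    ring
end

section
/- Let H and K be Hilbert spaces, S: H → K a bounded linear operator with adjoint S*, C = S*S, and let Ĉ: H → H be a positive (hence self-adjoint) bounded linear operator. Then for every λ > 0 the operator Ĉ + λI is invertible (with ‖(Ĉ+λI)⁻¹‖ ≤ λ⁻¹) and the operator-norm bound ‖(Ĉ + λI)⁻¹ S*‖ ≤ λ^{−1/2} (1 + λ^{−1/2} ‖C − Ĉ‖^{1/2}) holds. -/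
/-!
Write `A = Ĉ + λI`. Positivity of `Ĉ` gives `⟪A v, v⟫ ≥ λ‖v‖²`, so by the Lax–Milgram theorem `A` is
invertible, and Cauchy–Schwarz gives `‖A⁻¹‖ ≤ λ⁻¹`. Since `A⁻¹` is self-adjoint,
`‖A⁻¹ S*‖ = ‖S A⁻¹‖`, and for `u = A⁻¹ h`
`‖S u‖² = ⟪(S*S - Ĉ) u, u⟫ + ⟪Ĉ u, u⟫ ≤ ‖S*S - Ĉ‖ ‖u‖² + ⟪h, u⟫ ≤ (λ⁻² ‖S*S - Ĉ‖ + λ⁻¹) ‖h‖²`,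
which is bounded by the square of the claimed bound times `‖h‖²`.
-/


open scoped RealInnerProductSpace

/-- For `Ĉ` positive self-adjoint and `λ > 0`, the operator `Ĉ + λI` is invertible with
`‖(Ĉ+λI)⁻¹‖ ≤ λ⁻¹`, and `‖(Ĉ + λI)⁻¹ S*‖ ≤ λ^{-1/2}(1 + λ^{-1/2} ‖S*S − Ĉ‖^{1/2})`. -/
theorem stmt16
    {H K : Type*}
    [NormedAddCommGroup H] [InnerProductSpace ℝ H] [CompleteSpace H]
    [NormedAddCommGroup K] [InnerProductSpace ℝ K] [CompleteSpace K]
    (S : H →L[ℝ] K) (Chat : H →L[ℝ] H)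
    (hsa : IsSelfAdjoint Chat) (hpos : ∀ h : H, 0 ≤ ⟪Chat h, h⟫)
    (lam : ℝ) (hlam : 0 < lam) :
    ∃ T : H →L[ℝ] H,
      T ∘L (Chat + lam • (1 : H →L[ℝ] H)) = 1 ∧
      (Chat + lam • (1 : H →L[ℝ] H)) ∘L T = 1 ∧
      ‖T‖ ≤ lam⁻¹ ∧
      ‖T ∘L (ContinuousLinearMap.adjoint S)‖ ≤
        (Real.sqrt lam)⁻¹ * (1 + (Real.sqrt lam)⁻¹ *
          Real.sqrt ‖(ContinuousLinearMap.adjoint S) ∘L S - Chat‖) := by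
  set A : H →L[ℝ] H := Chat + lam • (1 : H →L[ℝ] H) with hA
  have hAapp (v : H) : A v = Chat v + lam • v := by simp [hA]
  have hquad (v : H) : ⟪A v, v⟫ = ⟪Chat v, v⟫ + lam * (‖v‖ * ‖v‖) := by
    rw [hAapp, inner_add_left, real_inner_smul_left, real_inner_self_eq_norm_mul_norm]
  have hAsym (x y : H) : ⟪A x, y⟫ = ⟪x, A y⟫ := by
    have h := hsa.isSymmetric x y
    simp only [ContinuousLinearMap.coe_coe] at h
    rw [hAapp, hAapp, inner_add_left, inner_add_right, real_inner_smul_left,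
      real_inner_smul_right, h]
  have hco : IsCoercive ((innerSL ℝ : H →L[ℝ] H →L[ℝ] ℝ) ∘L A) := by
    refine ⟨lam, hlam, fun v => ?_⟩
    have h : ((innerSL ℝ : H →L[ℝ] H →L[ℝ] ℝ) ∘L A) v v = ⟪A v, v⟫ := rfl
    rw [h, hquad]
    linarith [hpos v]
  let e := hco.continuousLinearEquivOfBilin
  have he (v : H) : e v = A v :=
    ext_inner_right ℝ fun w => hco.continuousLinearEquivOfBilin_apply v w
  set T : H →L[ℝ] H := (e.symm : H →L[ℝ] H) with hT
  have hTA (v : H) : T (A v) = v := by rw [← he]; exact e.symm_apply_apply v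
  have hAT (v : H) : A (T v) = v := by rw [← he]; exact e.apply_symm_apply v
  have hTnorm (h : H) : ‖T h‖ ≤ lam⁻¹ * ‖h‖ := by
    have h1 := hquad (T h)
    rw [hAT] at h1
    have h2 := real_inner_le_norm h (T h)
    have h3 := hpos (T h)
    rw [inv_mul_eq_div, le_div_iff₀ hlam]
    rcases (norm_nonneg (T h)).eq_or_lt with h0 | h0
    · rw [← h0]; simp
    · refine le_of_mul_le_mul_right ?_ h0
      nlinarith
  have hTsa : ContinuousLinearMap.adjoint T = T := by
    refine ((ContinuousLinearMap.eq_adjoint_iff T T).2 fun x y => ?_).symm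
    calc ⟪T x, y⟫ = ⟪T x, A (T y)⟫ := by rw [hAT]
      _ = ⟪x, T y⟫ := by rw [← hAsym, hAT]
  refine ⟨T, ContinuousLinearMap.ext hTA, ContinuousLinearMap.ext hAT,
    T.opNorm_le_bound (inv_nonneg.2 hlam.le) hTnorm, ?_⟩
  have hadj : T ∘L ContinuousLinearMap.adjoint S = ContinuousLinearMap.adjoint (S ∘L T) := by
    rw [ContinuousLinearMap.adjoint_comp, hTsa]
  rw [hadj, LinearIsometryEquiv.norm_map]
  set D : H →L[ℝ] H := ContinuousLinearMap.adjoint S ∘L S - Chat with hD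
  refine ContinuousLinearMap.opNorm_le_bound _ (by positivity) fun h => ?_
  have hsplit : ‖S (T h)‖ ^ 2 = ⟪D (T h), T h⟫ + ⟪Chat (T h), T h⟫ := by
    rw [← inner_add_left, ← real_inner_self_eq_norm_sq, ← ContinuousLinearMap.adjoint_inner_left]
    simp [hD]
  have hDle : ⟪D (T h), T h⟫ ≤ ‖D‖ * (lam⁻¹ * ‖h‖) ^ 2 :=
    calc ⟪D (T h), T h⟫ ≤ ‖D (T h)‖ * ‖T h‖ := real_inner_le_norm _ _
      _ ≤ ‖D‖ * ‖T h‖ * ‖T h‖ := by gcongr; exact D.le_opNorm _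
      _ = ‖D‖ * ‖T h‖ ^ 2 := by ring
      _ ≤ ‖D‖ * (lam⁻¹ * ‖h‖) ^ 2 := by gcongr; exact hTnorm h
  have hCle : ⟪Chat (T h), T h⟫ ≤ lam⁻¹ * ‖h‖ ^ 2 :=
    calc ⟪Chat (T h), T h⟫ ≤ ⟪A (T h), T h⟫ := by
          rw [hquad]; exact le_add_of_nonneg_right (by positivity)
      _ ≤ ‖h‖ * ‖T h‖ := by rw [hAT]; exact real_inner_le_norm _ _
      _ ≤ ‖h‖ * (lam⁻¹ * ‖h‖) := by gcongr; exact hTnorm h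
      _ = lam⁻¹ * ‖h‖ ^ 2 := by ring
  rw [ContinuousLinearMap.comp_apply]
  refine (sq_le_sq₀ (norm_nonneg _) (by positivity)).1 ?_
  -- With `r = λ^{-1/2}` and `d = ‖D‖^{1/2}`, this is `r² + r⁴d² ≤ (r (1 + r d))²`.
  have hr : lam⁻¹ = (Real.sqrt lam)⁻¹ ^ 2 := by rw [inv_pow, Real.sq_sqrt hlam.le]
  have hd : ‖D‖ = Real.sqrt ‖D‖ ^ 2 := (Real.sq_sqrt (norm_nonneg D)).symm
  rw [hr] at hDle hCle
  rw [hd] at hDle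
  have hcross : 0 ≤ 2 * ((Real.sqrt lam)⁻¹ ^ 3 * Real.sqrt ‖D‖ * ‖h‖ ^ 2) := by positivity
  linarith
end
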